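/- Assume: the items {1,…,m+1} are partitioned into goods G, chores C, and nonnegatively-valued items G_0; item m+1 satisfies v̄_i(m+1) = λ/2 for all agents i, for some λ > 0; every good j ∈ G satisfies v̄_i(j) ≥ λ/2 for all agents i; every chore j ∈ C satisfies v̄_i(j) ≤ −λ/2 for all agents i; m ≥ 2; V = max_{i,j} |v̄_i(j)| > 0; and η = λ/(2 m n V). Then there exists a point w* ∈ Δ_{n−1} such that for every agent i ∈ [n] there is an allocation A^{(i)} maximizing Σ_k (w*_k + η) v̄_k(A^{(i)}_k) over all allocations and satisfying p(A^{(i)}_i) ≥ p(A^{(i)}_j) for all j ∈ [n], where p_j = max_k (w*_k + η) v̄_k(j). -/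

import Mathlib

open Finset

/-- Value of a bundle under an additive valuation. -/
def bval {α : Type*} (u : α → ℝ) (S : Finset α) : ℝ := ∑ j ∈ S, u j

/-- An allocation: every item belongs to exactly one agent's bundle. -/
def IsAlloc {n : ℕ} {I : Type*} (A : Fin n → Finset I) : Prop :=
  ∀ j : I, ∃! i : Fin n, j ∈ A i

set_option linter.unusedSectionVars false

section Scarf

variable {I X : Type*} [Fintype I] [DecidableEq I] [Fintype X] [DecidableEq X]

/-- Scarf dominance of a set of points with respect to a family of orders. -/
def ScDom (r : I → X → ℕ) (P : Finset X) : Prop := ∀ y, ∃ i, ∀ x ∈ P, r i y ≤ r i x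

/-- Candidates for entering a door `τ` at index `j`. -/
def ScM (r : I → X → ℕ) (τ : Finset X) (j : I) (y : X) : Prop :=
  ∀ i, i ≠ j → ∃ x ∈ τ, r i x < r i y

/-- Maximal candidates. -/
def ScMax (r : I → X → ℕ) (τ : Finset X) (j : I) (x : X) : Prop :=
  ScM r τ j x ∧ ∀ y, ScM r τ j y → r j y ≤ r j x

lemma ScDom.mono {r : I → X → ℕ} {P Q : Finset X} (h : ScDom r P) (hQ : Q ⊆ P) : ScDom r Q := by
  intro y
  obtain ⟨i, hi⟩ := h y
  exact ⟨i, fun x hx => hi x (hQ hx)⟩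

open Classical in
lemma sc_max_card (r : I → X → ℕ) (hr : ∀ i, Function.Injective (r i)) (τ : Finset X) (j : I) :
    (univ.filter (fun x => ScMax r τ j x)).card = if ∃ y, ScM r τ j y then 1 else 0 := by
  split_ifs with h
  · rw [Finset.card_eq_one]
    obtain ⟨y, hy⟩ := h
    obtain ⟨x, hx, hmax⟩ := Finset.exists_max_image (univ.filter (fun x => ScM r τ j x)) (r j)
      ⟨y, by simpa using hy⟩
    simp only [mem_filter, mem_univ, true_and] at hx hmax
    refine ⟨x, ?_⟩
    ext z
    simp only [mem_filter, mem_univ, true_and, mem_singleton]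
    constructor
    · rintro ⟨h1, h2⟩
      exact hr j (le_antisymm (hmax z h1) (h2 x hx))
    · rintro rfl
      exact ⟨hx, hmax⟩
  · rw [Finset.card_eq_zero, Finset.filter_eq_empty_iff]
    intro x _ hx
    exact h ⟨x, hx.1⟩

open Classical in
lemma sc_rooms (r : I → X → ℕ) (hr : ∀ i, Function.Injective (r i)) (τ : Finset X)
    (hne : τ.Nonempty) (hcard : τ.card + 1 = Fintype.card I) (hdom : ScDom r τ) :
    ∃ a b : I, a ≠ b ∧ (∃ t ∈ τ, ∀ x ∈ τ, r a t ≤ r a x ∧ r b t ≤ r b x) ∧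
      (univ.filter (fun x => x ∉ τ ∧ ScDom r (insert x τ))).card =
        (if ∃ y, ScM r τ a y then 1 else 0) + (if ∃ y, ScM r τ b y then 1 else 0) := by
  have hf : ∀ i, ∃ t ∈ τ, ∀ x ∈ τ, r i t ≤ r i x := fun i =>
    Finset.exists_min_image τ (r i) hne
  choose f hfm hfmin using hf
  have hsurj : ∀ t ∈ τ, ∃ i, f i = t := by
    intro t ht
    obtain ⟨i, hi⟩ := hdom t
    exact ⟨i, hr i (le_antisymm (hfmin i t ht) (hi _ (hfm i)))⟩
  have huniq : ∀ (i : I) (t : X), t ∈ τ → (∀ x ∈ τ, r i t ≤ r i x) → f i = t := by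
    intro i t ht h
    exact hr i (le_antisymm (hfmin i t ht) (h _ (hfm i)))
  -- injectivity off `j`
  have hinj : ∀ j, (∀ t ∈ τ, ∃ i, i ≠ j ∧ f i = t) → ∀ i i', i ≠ j → i' ≠ j → f i = f i' → i = i' := by
    intro j hj i i' hi hi' hii
    have himg : (univ.erase j).image f = τ := by
      ext t
      simp only [mem_image, mem_erase, mem_univ, and_true]
      constructor
      · rintro ⟨i, -, rfl⟩; exact hfm i
      · exact hj t
    have hc : ((univ.erase j).image f).card = (univ.erase j).card := by
      rw [himg, Finset.card_erase_of_mem (mem_univ _), Finset.card_univ]; omega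
    have := Finset.card_image_iff.mp hc
    exact this (by simpa using hi) (by simpa using hi') hii
  obtain ⟨a, -, b, -, hab, hfab⟩ := Finset.exists_ne_map_eq_of_card_lt_of_maps_to
    (s := (univ : Finset I)) (t := τ) (f := f) (by rw [Finset.card_univ]; omega) (fun i _ => hfm i)
  have hoff : ∀ j, (j = a ∨ j = b) → ∀ t ∈ τ, ∃ i, i ≠ j ∧ f i = t := by
    intro j hj t ht
    obtain ⟨i, hi⟩ := hsurj t ht
    by_cases hij : i = j
    · rcases hj with rfl | rfl
      · exact ⟨b, hab.symm, by rw [← hfab, ← hij, hi]⟩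
      · exact ⟨a, hab, by rw [hfab, ← hij, hi]⟩
    · exact ⟨i, hij, hi⟩
  refine ⟨a, b, hab, ⟨f a, hfm a, fun x hx => ⟨hfmin a x hx, hfab ▸ hfmin b x hx⟩⟩, ?_⟩
  rw [← sc_max_card r hr, ← sc_max_card r hr, ← Finset.card_union_of_disjoint]
  · congr 1
    ext x
    simp only [mem_filter, mem_univ, true_and, mem_union]
    constructor
    · rintro ⟨hx, hd⟩
      obtain ⟨j, hj⟩ := hd x
      have hjlt : ∀ t ∈ τ, r j x < r j t := by
        intro t ht
        refine lt_of_le_of_ne (hj t (mem_insert_of_mem ht)) ?_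
        intro h
        exact hx (hr j h ▸ ht)
      have hoffj : ∀ t ∈ τ, ∃ i, i ≠ j ∧ f i = t ∧ r i t ≤ r i x := by
        intro t ht
        obtain ⟨i, hi⟩ := hd t
        refine ⟨i, ?_, huniq i t ht (fun x hx => hi x (mem_insert_of_mem hx)),
          hi x (mem_insert_self _ _)⟩
        rintro rfl
        exact absurd (hi x (mem_insert_self _ _)) (not_le.mpr (hjlt t ht))
      have hinjj := hinj j (fun t ht => by
        obtain ⟨i, h1, h2, -⟩ := hoffj t ht
        exact ⟨i, h1, h2⟩)
      have hjab : j = a ∨ j = b := by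
        by_contra h
        push Not at h
        exact hab (hinjj a b h.1.symm h.2.symm hfab)
      have hmax : ScMax r τ j x := by
        refine ⟨?_, ?_⟩
        · intro i hij
          refine ⟨f i, hfm i, ?_⟩
          obtain ⟨i', h1, h2, h3⟩ := hoffj (f i) (hfm i)
          have : i' = i := hinjj i' i h1 hij h2
          subst this
          refine lt_of_le_of_ne h3 ?_
          intro h
          exact hx (hr _ h ▸ hfm _)
        · intro y hy
          obtain ⟨i, hi⟩ := hd y
          by_cases hij : i = j
          · subst hij; exact hi x (mem_insert_self _ _)
          · obtain ⟨z, hz, hlt⟩ := hy i hij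
            exact absurd (hi z (mem_insert_of_mem hz)) (not_le.mpr hlt)
      rcases hjab with rfl | rfl
      · exact Or.inl hmax
      · exact Or.inr hmax
    · intro h
      obtain ⟨j, hjab, hM, hmax⟩ : ∃ j, (j = a ∨ j = b) ∧ ScMax r τ j x := by
        rcases h with h | h
        · exact ⟨a, Or.inl rfl, h⟩
        · exact ⟨b, Or.inr rfl, h⟩
      refine ⟨?_, ?_⟩
      · intro hx
        obtain ⟨i, hij, hi⟩ := hoff j hjab x hx
        obtain ⟨z, hz, hlt⟩ := hM i hij
        rw [← hi] at hlt
        exact absurd (hfmin i z hz) (not_le.mpr hlt)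
      · intro y
        by_cases hy : ScM r τ j y
        · refine ⟨j, ?_⟩
          intro z hz
          rcases mem_insert.mp hz with rfl | hz
          · exact hmax y hy
          · obtain ⟨i, hi⟩ := hdom y
            by_cases hij : i = j
            · subst hij; exact hi z hz
            · obtain ⟨z', hz', hlt⟩ := hy i hij
              exact absurd (hi z' hz') (not_le.mpr hlt)
        · unfold ScM at hy
          push Not at hy
          obtain ⟨i, hij, hi⟩ := hy
          refine ⟨i, ?_⟩
          intro z hz
          rcases mem_insert.mp hz with rfl | hz
          · obtain ⟨z', hz', hlt⟩ := hM i hij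
            exact (hi z' hz').trans hlt.le
          · exact hi z hz
  · rw [Finset.disjoint_left]
    intro x hxa hxb
    simp only [mem_filter, mem_univ, true_and] at hxa hxb
    obtain ⟨i, hi⟩ := hdom x
    by_cases hia : i = a
    · obtain ⟨z, hz, hlt⟩ := hxb.1 i (by rw [hia]; exact hab)
      exact absurd (hi z hz) (not_le.mpr hlt)
    · obtain ⟨z, hz, hlt⟩ := hxa.1 i hia
      exact absurd (hi z hz) (not_le.mpr hlt)

open Classical in
lemma sc_rooms_image (r : I → X → ℕ) (τ : Finset X)
    (hcard : τ.card + 1 = Fintype.card I) :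
    ((univ.filter (fun P : Finset X => ScDom r P ∧ P.card = Fintype.card I)).filter
      (fun P => τ ⊆ P)).card =
    (univ.filter (fun x => x ∉ τ ∧ ScDom r (insert x τ))).card := by
  symm
  apply Finset.card_bij (fun x _ => insert x τ)
  · intro x hx
    simp only [mem_filter, mem_univ, true_and] at hx ⊢
    exact ⟨⟨hx.2, by rw [card_insert_of_notMem hx.1, hcard]⟩, subset_insert _ _⟩
  · intro x hx y hy h
    simp only [mem_filter, mem_univ, true_and] at hx hy
    have : x ∈ insert y τ := h ▸ mem_insert_self x τ
    rcases mem_insert.mp this with h | h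
    · exact h
    · exact absurd h hx.1
  · intro P hP
    simp only [mem_filter, mem_univ, true_and] at hP
    obtain ⟨⟨hd, hc⟩, hs⟩ := hP
    have h1 : (P \ τ).card = 1 := by rw [card_sdiff_of_subset hs]; omega
    obtain ⟨x, hx⟩ := card_eq_one.mp h1
    have hxm : x ∈ P \ τ := hx ▸ mem_singleton_self x
    rw [mem_sdiff] at hxm
    have hP : insert x τ = P := by
      apply Finset.eq_of_subset_of_card_le
      · exact insert_subset hxm.1 hs
      · rw [card_insert_of_notMem hxm.2]; omega
    refine ⟨x, ?_, hP⟩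
    simp only [mem_filter, mem_univ, true_and]
    exact ⟨hxm.2, hP ▸ hd⟩

open Classical in
lemma sc_doors_even (r : I → X → ℕ) (c : X → I) (i0 : I) (P : Finset X) (hP : ScDom r P)
    (hPc : P.card = Fintype.card I) (hcP : P.image c ≠ univ) :
    Even (((univ.filter (fun τ : Finset X => ScDom r τ ∧ τ.card + 1 = Fintype.card I ∧
      τ.image c = univ.erase i0)).filter (fun τ => τ ⊆ P)).card) := by
  by_cases hex : ∃ τ, τ ⊆ P ∧ τ.card + 1 = Fintype.card I ∧ τ.image c = univ.erase i0
  · have hcP' : P.image c = univ.erase i0 := by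
      obtain ⟨τ, h1, h2, h3⟩ := hex
      apply Finset.Subset.antisymm
      · intro k hk
        rw [mem_erase]
        refine ⟨?_, mem_univ _⟩
        rintro rfl
        apply hcP
        rw [eq_univ_iff_forall]
        intro j
        by_cases hj : j = k
        · rw [hj]; exact hk
        · have : j ∈ univ.erase k := by simp [hj]
          rw [← h3] at this
          exact image_subset_image h1 this
      · rw [← h3]; exact image_subset_image h1
    obtain ⟨x, hx, y, hy, hxy, hcxy⟩ := Finset.exists_ne_map_eq_of_card_lt_of_maps_to
      (s := P) (t := univ.erase i0) (f := c)
      (by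
        rw [hPc, card_erase_of_mem (mem_univ _), card_univ]
        have : 0 < Fintype.card I := Fintype.card_pos_iff.mpr ⟨i0⟩
        omega) (fun z hz => by rw [← hcP']; exact mem_image_of_mem c hz)
    have key : ∀ u v : X, u ∈ P → v ∈ P → u ≠ v → c u = c v →
        (P.erase u).image c = univ.erase i0 := by
      intro u v hu hv huv hc
      rw [← hcP']
      apply Finset.Subset.antisymm (image_subset_image (erase_subset _ _))
      intro k hk
      obtain ⟨z, hz, rfl⟩ := mem_image.mp hk
      by_cases hzu : z = u
      · rw [hzu, hc]; exact mem_image_of_mem c (mem_erase.mpr ⟨huv.symm, hv⟩)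
      · exact mem_image_of_mem c (mem_erase.mpr ⟨hzu, hz⟩)
    have hset : ((univ.filter (fun τ : Finset X => ScDom r τ ∧ τ.card + 1 = Fintype.card I ∧
      τ.image c = univ.erase i0)).filter (fun τ => τ ⊆ P)) = {P.erase x, P.erase y} := by
      ext τ
      simp only [mem_filter, mem_univ, true_and, mem_insert, mem_singleton]
      constructor
      · rintro ⟨⟨-, hc, him⟩, hs⟩
        have hinj : Set.InjOn c τ := by
          apply Finset.card_image_iff.mp
          rw [him, card_erase_of_mem (mem_univ _), card_univ]; omega
        by_contra hcon
        push Not at hcon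
        have hin : ∀ u ∈ P, τ ≠ P.erase u → u ∈ τ := by
          intro u hu hne
          by_contra hut
          apply hne
          apply Finset.eq_of_subset_of_card_le
          · intro z hz
            refine mem_erase.mpr ⟨?_, hs hz⟩
            rintro rfl
            exact hut hz
          · rw [card_erase_of_mem hu]; omega
        exact hxy (hinj (hin x hx hcon.1) (hin y hy hcon.2) hcxy)
      · have hpos : 0 < P.card := card_pos.mpr ⟨x, hx⟩
        rintro (rfl | rfl)
        · exact ⟨⟨hP.mono (erase_subset _ _), by rw [card_erase_of_mem hx]; omega,
            key x y hx hy hxy hcxy⟩, erase_subset _ _⟩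
        · exact ⟨⟨hP.mono (erase_subset _ _), by rw [card_erase_of_mem hy]; omega,
            key y x hy hx hxy.symm hcxy.symm⟩, erase_subset _ _⟩
    rw [hset, Finset.card_pair]
    · exact even_two
    · intro h
      have : x ∈ P.erase y := mem_erase.mpr ⟨hxy, hx⟩
      rw [← h] at this
      exact notMem_erase x P this
  · have : ((univ.filter (fun τ : Finset X => ScDom r τ ∧ τ.card + 1 = Fintype.card I ∧
      τ.image c = univ.erase i0)).filter (fun τ => τ ⊆ P)) = ∅ := by
      rw [Finset.filter_eq_empty_iff]
      intro τ hτ hs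
      simp only [mem_filter, mem_univ, true_and] at hτ
      exact hex ⟨τ, hs, hτ.2⟩
    rw [this]; simp

set_option maxHeartbeats 1000000 in
open Classical in
/-- Scarf's lemma with slack points. -/
lemma scarf (r : I → X → ℕ) (hr : ∀ i, Function.Injective (r i)) (s : I → X)
    (hsinj : Function.Injective s)
    (hcI : 2 ≤ Fintype.card I)
    (hmin : ∀ i x, x ≠ s i → r i (s i) < r i x)
    (hslack : ∀ i k x, k ≠ i → (∀ j, x ≠ s j) → r i x < r i (s k))
    (x0 : X) (hx0 : ∀ j, x0 ≠ s j)
    (c : X → I) (hc : ∀ i, c (s i) = i) :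
    ∃ P : Finset X, ScDom r P ∧ P.card = Fintype.card I ∧ P.image c = univ := by
  by_contra hcon
  push Not at hcon
  obtain ⟨i0⟩ : Nonempty I := Fintype.card_pos_iff.mp (by omega)
  set R := univ.filter (fun P : Finset X => ScDom r P ∧ P.card = Fintype.card I) with hR
  set D := univ.filter (fun τ : Finset X => ScDom r τ ∧ τ.card + 1 = Fintype.card I ∧
      τ.image c = univ.erase i0) with hD
  have hdc : ∑ τ ∈ D, (R.filter (fun P => τ ⊆ P)).card =
      ∑ P ∈ R, (D.filter (fun τ => τ ⊆ P)).card :=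
    Finset.sum_card_bipartiteAbove_eq_sum_card_bipartiteBelow
      (fun (τ : Finset X) (P : Finset X) => τ ⊆ P)
  have heven : Even (∑ P ∈ R, (D.filter (fun τ => τ ⊆ P)).card) := by
    apply Finset.even_sum
    intro P hP
    simp only [hR, mem_filter, mem_univ, true_and] at hP
    exact sc_doors_even r c i0 P hP.1 hP.2 (hcon P hP.1 hP.2)
  set τ0 : Finset X := (univ.erase i0).image s with hτ0
  have hτ0mem : ∀ k, k ≠ i0 → s k ∈ τ0 := fun k hk =>
    mem_image_of_mem s (mem_erase.mpr ⟨hk, mem_univ _⟩)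
  have hτ0c : τ0.card + 1 = Fintype.card I := by
    rw [hτ0, card_image_of_injective _ hsinj, card_erase_of_mem (mem_univ _), card_univ]; omega
  have hτ0D : τ0 ∈ D := by
    simp only [hD, mem_filter, mem_univ, true_and]
    refine ⟨?_, hτ0c, ?_⟩
    · intro y
      by_cases hy : ∃ k, k ≠ i0 ∧ y = s k
      · obtain ⟨k, hk, rfl⟩ := hy
        refine ⟨k, fun x _ => ?_⟩
        by_cases h : x = s k
        · rw [h]
        · exact (hmin k x h).le
      · push Not at hy
        refine ⟨i0, fun x hx => ?_⟩
        obtain ⟨k, hk, rfl⟩ := mem_image.mp hx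
        have hk' := (mem_erase.mp hk).1
        by_cases h : y = s i0
        · rw [h]; exact (hmin i0 _ (fun h => hk' (hsinj h))).le
        · refine (hslack i0 k y hk' ?_).le
          intro j
          by_cases hj : j = i0
          · rw [hj]; exact h
          · exact hy j hj
    · rw [hτ0, image_image]
      have : c ∘ s = id := funext hc
      rw [this, image_id]
  have hodd : Odd (∑ τ ∈ D, (R.filter (fun P => τ ⊆ P)).card) := by
    rw [← Finset.add_sum_erase _ _ hτ0D]
    apply Odd.add_even
    · rw [sc_rooms_image r τ0 hτ0c]
      have hd : ScDom r τ0 := by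
        simp only [hD, mem_filter, mem_univ, true_and] at hτ0D
        exact hτ0D.1
      obtain ⟨a, b, hab, ⟨t, ht, htmin⟩, hcard⟩ := sc_rooms r hr τ0
        (card_pos.mp (by omega)) hτ0c hd
      rw [hcard]
      have hM0 : ∃ y, ScM r τ0 i0 y :=
        ⟨x0, fun i hi => ⟨s i, hτ0mem i hi, hmin i x0 (hx0 i)⟩⟩
      have hts : ∀ j, j ≠ i0 → (∀ x ∈ τ0, r j t ≤ r j x) → t = s j := by
        intro j hj h
        by_contra hne
        exact absurd (h _ (hτ0mem j hj)) (not_le.mpr (hmin j t hne))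
      have hMl : ∀ l, l ≠ i0 → t = s l → (∀ x ∈ τ0, r i0 t ≤ r i0 x) → ¬ ∃ y, ScM r τ0 l y := by
        rintro l hl rfl hm ⟨y, hy⟩
        obtain ⟨x, hx, hlt⟩ := hy i0 hl.symm
        have hlt' : r i0 (s l) < r i0 y := lt_of_le_of_lt (hm x hx) hlt
        by_cases hys : ∃ k, y = s k
        · obtain ⟨k, rfl⟩ := hys
          by_cases hkl : k = l
          · rw [hkl] at hlt'; exact lt_irrefl _ hlt'
          · obtain ⟨z, hz, hzlt⟩ := hy k hkl
            by_cases hzk : z = s k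
            · rw [hzk] at hzlt; exact lt_irrefl _ hzlt
            · exact lt_asymm hzlt (hmin k z hzk)
        · push Not at hys
          exact lt_asymm hlt' (hslack i0 l y hl hys)
      by_cases ha : a = i0
      · subst ha
        have hb := hts b hab.symm (fun x hx => (htmin x hx).2)
        rw [if_pos hM0, if_neg (hMl b hab.symm hb (fun x hx => (htmin x hx).1))]
        exact odd_one
      · have ha' := hts a ha (fun x hx => (htmin x hx).1)
        have hb : b = i0 := by
          by_contra hb
          have hb' := hts b hb (fun x hx => (htmin x hx).2)
          exact hab (hsinj (ha'.symm.trans hb'))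
        subst hb
        rw [if_pos hM0, if_neg (hMl a ha ha' (fun x hx => (htmin x hx).2))]
        exact odd_one
    · apply Finset.even_sum
      intro τ hτ
      obtain ⟨hne, hτ⟩ := mem_erase.mp hτ
      simp only [hD, mem_filter, mem_univ, true_and] at hτ
      obtain ⟨hd, hcd, him⟩ := hτ
      rw [sc_rooms_image r τ hcd]
      have hreal : ∃ x ∈ τ, ∀ j, x ≠ s j := by
        by_contra h
        push Not at h
        apply hne
        apply Finset.eq_of_subset_of_card_le
        · intro x hx
          obtain ⟨j, rfl⟩ := h x hx
          apply hτ0mem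
          have : c (s j) ∈ τ.image c := mem_image_of_mem c hx
          rw [him, hc] at this
          exact (mem_erase.mp this).1
        · omega
      obtain ⟨x, hx, hxs⟩ := hreal
      have hM : ∀ j, ∃ y, ScM r τ j y := fun j =>
        ⟨s j, fun i hi => ⟨x, hx, hslack i j x hi.symm hxs⟩⟩
      obtain ⟨a, b, hab, -, hcard⟩ := sc_rooms r hr τ ⟨x, hx⟩ hcd hd
      rw [hcard, if_pos (hM a), if_pos (hM b)]
      exact even_two
  rw [hdc] at hodd
  exact (Nat.not_even_iff_odd.mpr hodd) heven

end Scarf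

section KKM

lemma lex_aux {M a b e f : ℕ} (hf : f < M) (h : 1 + M * a + e ≤ 1 + M * b + f) : a ≤ b := by
  by_contra hab
  push Not at hab
  have : M * (b + 1) ≤ M * a := Nat.mul_le_mul_left M hab
  have h2 : M * (b + 1) = M * b + M := by ring
  omega

lemma grid_scarf (n N : ℕ) (hn : 2 ≤ n) (col : (Fin n → ℕ) → Fin n) :
    ∃ (C : Finset (Fin n)) (x : Fin n → Fin n → ℕ),
      (∀ k ∈ C, ∑ i, x k i = N ∧ col (x k) = k) ∧
      ∀ y : Fin n → ℕ, ∑ i, y i = N → ∃ i ∈ C, ∀ k ∈ C, y i ≤ x k i := by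
  classical
  let T := {x : Fin n → ℕ // x ∈ Finset.piAntidiag (univ : Finset (Fin n)) N}
  have hT : ∀ x : T, ∑ i, x.1 i = N := fun x => (Finset.mem_piAntidiag.mp x.2).1
  have mkT : ∀ y : Fin n → ℕ, ∑ i, y i = N → y ∈ Finset.piAntidiag (univ : Finset (Fin n)) N :=
    fun y hy => Finset.mem_piAntidiag.mpr ⟨hy, fun i _ => mem_univ i⟩
  let M := Fintype.card T
  let e : T ≃ Fin M := Fintype.equivFin T
  have hle : ∀ (x : T) (i : Fin n), x.1 i ≤ N := by
    intro x i
    refine le_trans ?_ (hT x).le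
    exact Finset.single_le_sum (f := fun i => x.1 i) (fun _ _ => Nat.zero_le _) (mem_univ i)
  let r : Fin n → T ⊕ Fin n → ℕ := fun i p => match p with
    | Sum.inl x => 1 + M * x.1 i + (e x : ℕ)
    | Sum.inr k => if k = i then 0 else 1 + M * (N + 1) + (k : ℕ)
  have hrl : ∀ i (x : T), r i (Sum.inl x) = 1 + M * x.1 i + (e x : ℕ) := fun _ _ => rfl
  have hrr : ∀ i k, r i (Sum.inr k) = if k = i then 0 else 1 + M * (N + 1) + (k : ℕ) :=
    fun _ _ => rfl
  have hlt : ∀ i (x : T), r i (Sum.inl x) < 1 + M * (N + 1) := by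
    intro i x
    rw [hrl]
    have h1 := Nat.mul_le_mul_left M (hle x i)
    have h2 : M * (N + 1) = M * N + M := by ring
    have h3 := (e x).2
    omega
  have hpos : ∀ i (x : T), 0 < r i (Sum.inl x) := by
    intro i x; rw [hrl]; omega
  let c : T ⊕ Fin n → Fin n := fun p => match p with
    | Sum.inl x => col x.1
    | Sum.inr k => k
  have hx0 : ∑ i, (Pi.single (⟨0, by omega⟩ : Fin n) N : Fin n → ℕ) i = N := by
    simp
  obtain ⟨P, hdom, hcard, him⟩ := scarf r
    (by
      intro i p q hpq
      rcases p with x | k <;> rcases q with y | l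
      · rw [hrl, hrl] at hpq
        have h1 := lex_aux (e y).2 hpq.le
        have h2 := lex_aux (e x).2 hpq.ge
        have h3 : x.1 i = y.1 i := le_antisymm h1 h2
        rw [h3] at hpq
        have : e x = e y := Fin.ext (by omega)
        rw [e.injective this]
      · have h1 := hlt i x
        have h2 := hpos i x
        rw [hpq, hrr] at h1 h2
        split_ifs at h1 h2 <;> omega
      · have h1 := hlt i y
        have h2 := hpos i y
        rw [← hpq, hrr] at h1 h2
        split_ifs at h1 h2 <;> omega
      · rw [hrr, hrr] at hpq
        congr 1
        apply Fin.ext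
        split_ifs at hpq with h1 h2 <;> first | omega | (rw [h1, h2]))
    Sum.inr Sum.inr_injective (by simpa using hn)
    (by
      intro i p hp
      rw [hrr i i, if_pos rfl]
      rcases p with x | k
      · exact hpos i x
      · rw [hrr, if_neg (fun h => hp (by rw [h]))]; omega)
    (by
      intro i k p hk hp
      rcases p with x | l
      · rw [hrr, if_neg hk]
        have := hlt i x
        omega
      · exact absurd rfl (hp l))
    (Sum.inl ⟨_, mkT _ hx0⟩) (by intro j; exact Sum.inl_ne_inr) c (fun i => rfl)
  have hq : ∀ k, ∃ p ∈ P, c p = k := by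
    intro k
    have : k ∈ P.image c := by rw [him]; exact mem_univ k
    simpa using this
  choose q hqP hqc using hq
  refine ⟨univ.filter (fun k => ∃ x : T, q k = Sum.inl x),
    fun k => Sum.elim (fun x : T => x.1) (fun _ => 0) (q k), ?_, ?_⟩
  · intro k hk
    obtain ⟨x, hx⟩ := (mem_filter.mp hk).2
    simp only [hx, Sum.elim_inl]
    refine ⟨hT x, ?_⟩
    have := hqc k
    rw [hx] at this
    exact this
  · intro y hy
    obtain ⟨i, hi⟩ := hdom (Sum.inl ⟨y, mkT y hy⟩)
    refine ⟨i, ?_, ?_⟩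
    · simp only [mem_filter, mem_univ, true_and]
      rcases hqi : q i with x | k
      · exact ⟨x, rfl⟩
      · exfalso
        have h1 := hqc i
        rw [hqi] at h1
        have h1' : k = i := h1
        have h2 := hi _ (hqP i)
        rw [hqi, hrr, if_pos h1'] at h2
        have := hpos i ⟨y, mkT y hy⟩
        omega
    · intro k hk
      obtain ⟨x, hx⟩ := (mem_filter.mp hk).2
      simp only [hx, Sum.elim_inl]
      have h2 := hi _ (hqP k)
      rw [hx, hrl, hrl] at h2
      exact lex_aux (e x).2 h2

lemma grid_close (n N : ℕ) (hn : 2 ≤ n) (col : (Fin n → ℕ) → Fin n) :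
    ∃ (x : Fin n → Fin n → ℕ), (∀ k, ∑ i, x k i = N) ∧
      (∀ k l i, x k i ≤ x l i + n) ∧
      ∀ k, col (x k) = k ∨ x k k ≤ n := by
  classical
  obtain ⟨C, x, hx, hdom⟩ := grid_scarf n N hn col
  obtain ⟨k0, hk0, -⟩ := hdom (Pi.single (⟨0, by omega⟩ : Fin n) N) (by simp)
  have hm : ∀ i, ∃ k ∈ C, ∀ l ∈ C, x k i ≤ x l i := fun i =>
    Finset.exists_min_image C (fun k => x k i) ⟨k0, hk0⟩
  choose f hfC hfmin using hm
  let m : Fin n → ℕ := fun i => if i ∈ C then x (f i) i else 0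
  have hmle : ∀ k ∈ C, ∀ i, m i ≤ x k i := by
    intro k hk i
    by_cases hi : i ∈ C
    · simp only [m, if_pos hi]; exact hfmin i k hk
    · simp only [m, if_neg hi]; exact Nat.zero_le _
  have hsum : N < ∑ i, m i + n := by
    by_contra hcon
    push Not at hcon
    let u : Fin n → ℕ := fun i => if i ∈ C then 1 else 0
    have hu : ∑ i, u i ≤ n := by
      calc ∑ i, u i ≤ ∑ i : Fin n, 1 := Finset.sum_le_sum (fun i _ => by
            simp only [u]; split_ifs <;> omega)
        _ = n := by simp
    let d := N - (∑ i, m i + ∑ i, u i)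
    obtain ⟨i, hi, hiy⟩ := hdom (fun i => m i + u i + (Pi.single k0 d : Fin n → ℕ) i) (by
      rw [Finset.sum_add_distrib, Finset.sum_add_distrib]
      have : ∑ i, (Pi.single k0 d : Fin n → ℕ) i = d := by simp
      rw [this]
      simp only [d]
      omega)
    have := hiy (f i) (hfC i)
    simp only [m, u, if_pos hi] at this
    omega
  have hup : ∀ k ∈ C, ∀ i, x k i ≤ m i + n := by
    intro k hk i
    have h1 := (hx k hk).1
    have h2 : x k i + ∑ j ∈ univ.erase i, x k j = N := by
      rw [Finset.add_sum_erase _ _ (mem_univ i)]; exact h1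
    have h3 : m i + ∑ j ∈ univ.erase i, m j = ∑ j, m j := by
      rw [Finset.add_sum_erase _ _ (mem_univ i)]
    have h4 : ∑ j ∈ univ.erase i, m j ≤ ∑ j ∈ univ.erase i, x k j :=
      Finset.sum_le_sum (fun j _ => hmle k hk j)
    omega
  let g : Fin n → Fin n := fun k => if k ∈ C then k else k0
  have hg : ∀ k, g k ∈ C := by
    intro k
    simp only [g]; split_ifs with h
    · exact h
    · exact hk0
  refine ⟨fun k => x (g k), fun k => (hx _ (hg k)).1, ?_, ?_⟩
  · intro k l i
    have h1 := hup _ (hg k) i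
    have h2 := hmle _ (hg l) i
    show x (g k) i ≤ x (g l) i + n
    omega
  · intro k
    by_cases hk : k ∈ C
    · left
      have : g k = k := by simp only [g, if_pos hk]
      show col (x (g k)) = k
      rw [this]; exact (hx k hk).2
    · right
      have h1 := hup _ (hg k) k
      simp only [m, if_neg hk] at h1
      show x (g k) k ≤ n
      omega

open Filter Topology in
/-- KKM lemma on the standard simplex. -/
lemma kkm (n : ℕ) (hn : 0 < n) (K : Fin n → Set (Fin n → ℝ)) (hK : ∀ i, IsClosed (K i))
    (hcov : ∀ w ∈ stdSimplex ℝ (Fin n), ∃ i, 0 < w i ∧ w ∈ K i) :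
    ∃ w ∈ stdSimplex ℝ (Fin n), ∀ i, w ∈ K i := by
  classical
  have hvert : ∀ i : Fin n, (Pi.single i 1 : Fin n → ℝ) ∈ K i := by
    intro i
    obtain ⟨j, hj, hjK⟩ := hcov _ (single_mem_stdSimplex ℝ i)
    have : j = i := by
      by_contra h
      rw [Pi.single_eq_of_ne h] at hj
      exact lt_irrefl _ hj
    rw [this] at hjK; exact hjK
  by_cases hn1 : n = 1
  · subst hn1
    exact ⟨_, single_mem_stdSimplex ℝ 0, fun i => by rw [Subsingleton.elim i 0]; exact hvert 0⟩
  have hn2 : 2 ≤ n := by omega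
  let g : Fin n → (Fin n → ℝ) → ℝ := fun i w => Metric.infDist w (K i)
  have hg0 : ∀ i w, 0 ≤ g i w := fun i w => Metric.infDist_nonneg
  have hgc : ∀ i, Continuous (g i) := fun i => Metric.continuous_infDist_pt (K i)
  let h : Fin n → (Fin n → ℝ) → ℝ := fun i w => g i w - w i * ∑ j, g j w
  have hhc : ∀ i, Continuous (h i) := fun i => by
    simp only [h]
    exact (hgc i).sub ((continuous_apply i).mul (continuous_finsetSum _ (fun j _ => hgc j)))
  have hsum : ∀ w ∈ stdSimplex ℝ (Fin n), ∑ i, h i w = 0 := by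
    intro w hw
    simp only [h]
    rw [Finset.sum_sub_distrib, ← Finset.sum_mul, hw.2, one_mul, sub_self]
  have hcol : ∀ w : Fin n → ℝ, ∃ i, w ∈ stdSimplex ℝ (Fin n) → 0 ≤ h i w := by
    intro w
    by_contra hcon
    push Not at hcon
    have hw := (hcon ⟨0, hn⟩).1
    have : ∑ i, h i w < 0 := Finset.sum_neg (fun i _ => (hcon i).2) ⟨⟨0, hn⟩, mem_univ _⟩
    rw [hsum w hw] at this
    exact lt_irrefl _ this
  choose col hcolp using hcol
  let z : ℕ → (Fin n → ℕ) → Fin n → ℝ := fun N x i => (x i : ℝ) / ((N : ℝ) + 1)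
  have hgrid := fun N : ℕ => grid_close n (N + 1) hn2 (fun x => col (z N x))
  choose x hxs hxc hxk using hgrid
  have hNpos : ∀ N : ℕ, (0 : ℝ) < (N : ℝ) + 1 := fun N => by positivity
  have hz : ∀ N k, z N (x N k) ∈ stdSimplex ℝ (Fin n) := by
    intro N k
    refine ⟨fun i => by simp only [z]; positivity, ?_⟩
    simp only [z]
    rw [← Finset.sum_div, div_eq_one_iff_eq (hNpos N).ne']
    have := hxs N k
    exact_mod_cast this
  let k0 : Fin n := ⟨0, hn⟩
  obtain ⟨w, hw, φ, hφ, hlim⟩ := (isCompact_stdSimplex ℝ (Fin n)).tendsto_subseq (fun N => hz N k0)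
  have hsmall : Tendsto (fun N : ℕ => (n : ℝ) / ((φ N : ℝ) + 1)) atTop (𝓝 0) := by
    apply Tendsto.div_atTop tendsto_const_nhds
    exact tendsto_atTop_add_const_right _ _ (tendsto_natCast_atTop_atTop.comp hφ.tendsto_atTop)
  have hlimk : ∀ k, Tendsto (fun N => z (φ N) (x (φ N) k)) atTop (𝓝 w) := by
    intro k
    rw [tendsto_pi_nhds] at hlim ⊢
    intro i
    have h1 := hlim i
    have hdiff : Tendsto (fun N => z (φ N) (x (φ N) k) i - z (φ N) (x (φ N) k0) i) atTop (𝓝 0) := by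
      apply squeeze_zero_norm _ hsmall
      intro N
      simp only [z]
      rw [← sub_div, norm_div, Real.norm_eq_abs, Real.norm_eq_abs, abs_of_pos (hNpos (φ N))]
      apply div_le_div_of_nonneg_right _ (hNpos (φ N)).le
      have h2 : (x (φ N) k i : ℝ) ≤ x (φ N) k0 i + n := by exact_mod_cast hxc (φ N) k k0 i
      have h3 : (x (φ N) k0 i : ℝ) ≤ x (φ N) k i + n := by exact_mod_cast hxc (φ N) k0 k i
      rw [abs_le]; constructor <;> linarith
    have := hdiff.add h1
    simpa using this
  have hnn : ∀ k, 0 ≤ h k w := by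
    intro k
    by_contra hneg
    push Not at hneg
    have hwk : 0 < w k := by
      rcases (hw.1 k).lt_or_eq with h0 | h0
      · exact h0
      · exfalso
        simp only [h] at hneg
        rw [← h0, zero_mul, sub_zero] at hneg
        exact absurd (hg0 k w) (not_le.mpr hneg)
    have e1 : ∀ᶠ N in atTop, h k (z (φ N) (x (φ N) k)) < 0 :=
      (((hhc k).tendsto w).comp (hlimk k)).eventually_lt_const hneg
    have e2 : ∀ᶠ N in atTop, (n : ℝ) / ((φ N : ℝ) + 1) < z (φ N) (x (φ N) k) k :=
      hsmall.eventually_lt ((tendsto_pi_nhds.mp (hlimk k)) k) hwk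
    obtain ⟨N, h1, h2⟩ := (e1.and e2).exists
    rcases hxk (φ N) k with h3 | h3
    · have := hcolp _ (hz (φ N) k)
      rw [h3] at this
      linarith
    · have h4 : z (φ N) (x (φ N) k) k ≤ (n : ℝ) / ((φ N : ℝ) + 1) := by
        simp only [z]
        apply div_le_div_of_nonneg_right _ (hNpos (φ N)).le
        exact_mod_cast h3
      linarith
  have hz0 : ∀ k, h k w = 0 := by
    have := (Finset.sum_eq_zero_iff_of_nonneg (fun i _ => hnn i)).mp (hsum w hw)
    exact fun k => this k (mem_univ k)
  obtain ⟨i, hi, hiK⟩ := hcov w hw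
  have hgi : g i w = 0 := Metric.infDist_zero_of_mem hiK
  have hG : ∑ j, g j w = 0 := by
    have := hz0 i
    simp only [h] at this
    rw [hgi, zero_sub, neg_eq_zero] at this
    rcases mul_eq_zero.mp this with h | h
    · exact absurd h hi.ne'
    · exact h
  have hall := (Finset.sum_eq_zero_iff_of_nonneg (fun j _ => hg0 j w)).mp hG
  refine ⟨w, hw, fun k => ?_⟩
  exact ((hK k).mem_iff_infDist_zero ⟨_, hvert k⟩).mpr (hall k (mem_univ k))

end KKM

lemma continuous_price (n : ℕ) (hn : 0 < n) (η : ℝ) (a : Fin n → ℝ) :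
    Continuous (fun w : Fin n → ℝ => ⨆ k, (w k + η) * a k) := by
  haveI : Nonempty (Fin n) := ⟨⟨0, hn⟩⟩
  have : (fun w : Fin n → ℝ => ⨆ k, (w k + η) * a k) =
      fun w => Finset.univ.sup' Finset.univ_nonempty (fun k => (w k + η) * a k) := by
    funext w
    rw [Finset.sup'_univ_eq_ciSup]
  rw [this]
  exact Continuous.finset_sup'_apply _ (fun k _ =>
    ((continuous_apply k).add continuous_const).mul continuous_const)

/-- Welfare of an allocation regrouped by items. -/
lemma welfare_eq {n m : ℕ} (u : Fin n → Fin (m+1) → ℝ) (B : Fin n → Finset (Fin (m+1)))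
    (o : Fin (m+1) → Fin n) (ho : ∀ t k, t ∈ B k ↔ o t = k) :
    ∑ k, ∑ t ∈ B k, u k t = ∑ t, u (o t) t := by
  classical
  rw [← Finset.sum_fiberwise (s := (univ : Finset (Fin (m+1)))) (g := o)
    (f := fun t => u (o t) t)]
  apply Finset.sum_congr rfl
  intro k _
  have hB : B k = univ.filter (fun t => o t = k) := by
    ext t; simp [ho]
  rw [hB]
  apply Finset.sum_congr rfl
  intro t ht
  rw [(mem_filter.mp ht).2]

lemma cover (n m : ℕ) (hn : 0 < n) (hm : 2 ≤ m)
    (vb : Fin n → Fin (m+1) → ℝ) (lam V η : ℝ) (hlam : 0 < lam)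
    (hlast : ∀ i, vb i (Fin.last m) = lam / 2)
    (hV : 0 < V) (hVub : ∀ i j, |vb i j| ≤ V)
    (hη : η = lam / (2 * m * n * V)) (w : Fin n → ℝ) (hw : w ∈ stdSimplex ℝ (Fin n)) :
    ∃ i : Fin n, 0 < w i ∧ ∃ A : Fin n → Finset (Fin (m+1)), IsAlloc A ∧
        (∀ B : Fin n → Finset (Fin (m+1)), IsAlloc B →
          ∑ k, (w k + η) * bval (vb k) (B k) ≤ ∑ k, (w k + η) * bval (vb k) (A k)) ∧
        ∀ j : Fin n,
          (∑ t ∈ A j, ⨆ k, (w k + η) * vb k t) ≤ ∑ t ∈ A i, ⨆ k, (w k + η) * vb k t := by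
  classical
  haveI : Nonempty (Fin n) := ⟨⟨0, hn⟩⟩
  set p : Fin (m+1) → ℝ := fun t => ⨆ k, (w k + η) * vb k t with hp
  have hple : ∀ t k, (w k + η) * vb k t ≤ p t := fun t k =>
    le_ciSup (f := fun k => (w k + η) * vb k t) (Set.finite_range _).bddAbove k
  have hpo : ∀ t, ∃ k, (w k + η) * vb k t = p t := fun t =>
    exists_eq_ciSup_of_finite (f := fun k => (w k + η) * vb k t)
  choose o ho using hpo
  set A : Fin n → Finset (Fin (m+1)) := fun k => univ.filter (fun t => o t = k) with hA
  have hAmem : ∀ t k, t ∈ A k ↔ o t = k := by intro t k; simp [hA]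
  obtain ⟨i, -, hi⟩ := Finset.exists_max_image (univ : Finset (Fin n)) (fun k => ∑ t ∈ A k, p t)
    univ_nonempty
  refine ⟨i, ?_, A, ?_, ?_, fun j => hi j (mem_univ j)⟩
  · have hmpos : (0 : ℝ) < m := by exact_mod_cast (by omega : 0 < m)
    have hnpos : (0 : ℝ) < n := by exact_mod_cast hn
    have hηpos : 0 < η := by rw [hη]; positivity
    by_contra hcon
    have hwi : w i = 0 := le_antisymm (not_lt.mp hcon) (hw.1 i)
    set δ := η * V with hδ
    have hδpos : 0 < δ := mul_pos hηpos hV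
    have hmδ : m * δ = lam / (2 * n) := by
      rw [hδ, hη]; field_simp
    -- price of the last item
    have hlastp : m * δ < p (Fin.last m) := by
      obtain ⟨k, -, hk⟩ : ∃ k ∈ (univ : Finset (Fin n)), (1 : ℝ) / n ≤ w k := by
        apply Finset.exists_le_of_sum_le univ_nonempty
        rw [hw.2]
        simp [hnpos.ne']
      have h1 := hple (Fin.last m) k
      rw [hlast] at h1
      rw [hmδ]
      have h2 : lam / (2 * n) = (1 / n) * (lam / 2) := by field_simp
      rw [h2]
      refine lt_of_lt_of_le ?_ h1
      apply mul_lt_mul_of_pos_right _ (by positivity)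
      linarith
    have habs : ∀ t, -δ ≤ η * vb i t ∧ η * vb i t ≤ δ := by
      intro t
      have := abs_le.mp (hVub i t)
      constructor
      · rw [hδ, ← mul_neg]; exact mul_le_mul_of_nonneg_left this.1 hηpos.le
      · exact mul_le_mul_of_nonneg_left this.2 hηpos.le
    have hlow : ∀ t, -δ ≤ p t := by
      intro t
      have := hple t i
      rw [hwi, zero_add] at this
      exact (habs t).1.trans this
    have hup : ∀ t ∈ A i, p t ≤ δ := by
      intro t ht
      have h1 := ho t
      rw [(hAmem t i).mp ht, hwi, zero_add] at h1
      rw [← h1]; exact (habs t).2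
    have hlnot : Fin.last m ∉ A i := by
      intro h
      have h1 := hup _ h
      have : (1 : ℝ) ≤ m := by exact_mod_cast (by omega : 1 ≤ m)
      nlinarith
    set h := o (Fin.last m) with hh
    have hlh : Fin.last m ∈ A h := (hAmem _ _).mpr rfl
    set E := (A h).erase (Fin.last m) with hE
    have hdisj : Disjoint (A i) E := by
      rw [Finset.disjoint_left]
      intro t ht hte
      have h1 := (hAmem t i).mp ht
      have h2 := (hAmem t h).mp (mem_of_mem_erase hte)
      have : i = h := h1.symm.trans h2
      exact hlnot (this ▸ hlh)
    have hcard : (A i).card + E.card ≤ m := by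
      rw [← card_union_of_disjoint hdisj]
      have hsub : A i ∪ E ⊆ univ.erase (Fin.last m) := by
        intro t ht
        rw [mem_erase]
        refine ⟨?_, mem_univ _⟩
        rintro rfl
        rcases mem_union.mp ht with h | h
        · exact hlnot h
        · exact notMem_erase _ _ h
      have := card_le_card hsub
      rw [card_erase_of_mem (mem_univ _), card_univ, Fintype.card_fin] at this
      omega
    have hcard' : ((A i).card : ℝ) + E.card ≤ m := by exact_mod_cast hcard
    have hsi : ∑ t ∈ A i, p t ≤ (A i).card * δ := by
      rw [← nsmul_eq_mul]; exact Finset.sum_le_card_nsmul _ _ _ hup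
    have hsE : (E.card : ℝ) * (-δ) ≤ ∑ t ∈ E, p t := by
      rw [← nsmul_eq_mul]; exact Finset.card_nsmul_le_sum _ _ _ (fun t _ => hlow t)
    have hsh : ∑ t ∈ A h, p t = p (Fin.last m) + ∑ t ∈ E, p t :=
      (Finset.add_sum_erase _ _ hlh).symm
    have := hi h (mem_univ h)
    nlinarith
  · intro t
    exact ⟨o t, (hAmem t _).mpr rfl, fun k hk => ((hAmem t k).mp hk).symm⟩
  · intro B hB
    choose ob hob hobu using hB
    have hobm : ∀ t k, t ∈ B k ↔ ob t = k := by
      intro t k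
      constructor
      · intro h; exact (hobu t k h).symm
      · rintro rfl; exact hob t
    simp only [bval, Finset.mul_sum]
    rw [welfare_eq (fun k t => (w k + η) * vb k t) B ob hobm,
      welfare_eq (fun k t => (w k + η) * vb k t) A o hAmem]
    apply Finset.sum_le_sum
    intro t _
    rw [ho t]
    exact hple t _

/-- KKM application: there is a weight vector `w*` in the simplex
such that every agent `i` has an allocation maximizing the `(w*+η)`-weighted
welfare in which `i` holds a highest-priced bundle, with prices
`p j = max_k (w* k + η) * v̄ k j`. -/
theorem stmt15 (n m : ℕ) (hn : 0 < n) (hm : 2 ≤ m)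
    (vb : Fin n → Fin (m+1) → ℝ) (lam V η : ℝ) (hlam : 0 < lam)
    (G C G0 : Finset (Fin (m+1)))
    (hcover : ∀ j, j ∈ G ∨ j ∈ C ∨ j ∈ G0)
    (hGC : Disjoint G C) (hGG0 : Disjoint G G0) (hCG0 : Disjoint C G0)
    (hGgood : ∀ j ∈ G, ∀ i, 0 < vb i j)
    (hCchore : ∀ j ∈ C, ∀ i, vb i j < 0)
    (hG0 : ∀ j ∈ G0, (∀ i, 0 ≤ vb i j) ∧ (∃ a, 0 < vb a j) ∧ (∃ b, vb b j = 0))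
    (hlast : ∀ i, vb i (Fin.last m) = lam / 2)
    (hGlb : ∀ j ∈ G, ∀ i, lam / 2 ≤ vb i j)
    (hCub : ∀ j ∈ C, ∀ i, vb i j ≤ -(lam / 2))
    (hV : 0 < V) (hVub : ∀ i j, |vb i j| ≤ V) (hVmem : ∃ i j, |vb i j| = V)
    (hη : η = lam / (2 * m * n * V)) :
    ∃ w ∈ stdSimplex ℝ (Fin n), ∀ i : Fin n,
      ∃ A : Fin n → Finset (Fin (m+1)), IsAlloc A ∧
        (∀ B : Fin n → Finset (Fin (m+1)), IsAlloc B →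
          ∑ k, (w k + η) * bval (vb k) (B k) ≤ ∑ k, (w k + η) * bval (vb k) (A k)) ∧
        ∀ j : Fin n,
          (∑ t ∈ A j, ⨆ k, (w k + η) * vb k t) ≤ ∑ t ∈ A i, ⨆ k, (w k + η) * vb k t := by
  apply kkm n hn (fun i => {w : Fin n → ℝ | ∃ A : Fin n → Finset (Fin (m+1)), IsAlloc A ∧
        (∀ B : Fin n → Finset (Fin (m+1)), IsAlloc B →
          ∑ k, (w k + η) * bval (vb k) (B k) ≤ ∑ k, (w k + η) * bval (vb k) (A k)) ∧
        ∀ j : Fin n,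
          (∑ t ∈ A j, ⨆ k, (w k + η) * vb k t) ≤ ∑ t ∈ A i, ⨆ k, (w k + η) * vb k t})
  · intro i
    rw [Set.setOf_exists]
    apply isClosed_iUnion_of_finite
    intro A
    have hwel : ∀ B : Fin n → Finset (Fin (m+1)),
        Continuous (fun w : Fin n → ℝ => ∑ k, (w k + η) * bval (vb k) (B k)) := fun B =>
      continuous_finsetSum _ (fun k _ =>
        ((continuous_apply k).add continuous_const).mul continuous_const)
    have hpr : ∀ j, Continuous (fun w : Fin n → ℝ => ∑ t ∈ A j, ⨆ k, (w k + η) * vb k t) :=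
      fun j => continuous_finsetSum _ (fun t _ => continuous_price n hn η (fun k => vb k t))
    simp only [Set.setOf_and, Set.setOf_forall]
    refine isClosed_const.inter (IsClosed.inter ?_ ?_)
    · exact isClosed_iInter (fun B => isClosed_iInter (fun _ => isClosed_le (hwel B) (hwel A)))
    · exact isClosed_iInter (fun j => isClosed_le (hpr j) (hpr i))
  · intro w hw
    exact cover n m hn hm vb lam V η hlam hlast hV hVub hη w hw
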